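/- For every a ∈ ℂ, the first constant terms of powers of the Laurent polynomial f_a = z(a + x + xy + y + x⁻¹ + x⁻¹y⁻¹ + y⁻¹) + z⁻¹ are given by: coeff₁(f_a⁰) = 1, coeff₁(f_a²) = 2a, coeff₁(f_a⁴) = 6a² + 36, coeff₁(f_a⁶) = 20a³ + 360a + 240, coeff₁(f_a⁸) = 70a⁴ + 2520a² + 3360a + 6300, and coeff₁(f_a¹⁰) = 252a⁵ + 15120a³ + 30240a² + 113400a + 90720. -/

import Mathlib

noncomputable section

open scoped Nat

/-- The Laurent polynomial ring in three variables over `ℂ`: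
the group algebra `ℂ[ℤ³]`, where `x^i y^j z^k` corresponds to `(i,j,k)`. -/
abbrev LaurentC3 : Type := AddMonoidAlgebra ℂ (ℤ × ℤ × ℤ)

/-- The variable `x`. -/
def X : LaurentC3 := AddMonoidAlgebra.single (1, 0, 0) 1
/-- The variable `y`. -/
def Y : LaurentC3 := AddMonoidAlgebra.single (0, 1, 0) 1
/-- The variable `z`. -/
def Z : LaurentC3 := AddMonoidAlgebra.single (0, 0, 1) 1
/-- The inverse variable `x⁻¹`. -/
def Xinv : LaurentC3 := AddMonoidAlgebra.single (-1, 0, 0) 1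
/-- The inverse variable `y⁻¹`. -/
def Yinv : LaurentC3 := AddMonoidAlgebra.single (0, -1, 0) 1
/-- The inverse variable `z⁻¹`. -/
def Zinv : LaurentC3 := AddMonoidAlgebra.single (0, 0, -1) 1

/-- The Laurent polynomial `f_a = z(a + x + xy + y + x⁻¹ + x⁻¹y⁻¹ + y⁻¹) + z⁻¹`. -/
def f (a : ℂ) : LaurentC3 :=
  Z * (AddMonoidAlgebra.single 0 a + X + X * Y + Y + Xinv + Xinv * Yinv + Yinv) + Zinv

/-!
Write `f_a = zP + z⁻¹`. Only the middle term of the binomial expansion of `(zP + z⁻¹)²ᵐ` has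
`z`-degree zero, so its constant term is `(2m choose m)` times that of `Pᵐ`. The identity
`2 + x + xy + y + x⁻¹ + x⁻¹y⁻¹ + y⁻¹ = (1 + x)(1 + y)(1 + x⁻¹y⁻¹)` gives
`P = (a - 2) + (1 + x)(1 + y)(1 + x⁻¹y⁻¹)`. In the `n`-th power of the product, the constant term
collects the monomials `xⁱ · yʲ · (x⁻¹y⁻¹)ᵏ` with `i = j = k`, hence equals the Franel number
`∑ₖ (n choose k)³`.
-/

section

open AddMonoidAlgebra

variable {R M G ι : Type*} [CommSemiring R]

lemma coeff_add_pow_two_mul_of_mem_gradeBy [AddCommMonoid M] [AddCommGroup ι]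
    [IsAddTorsionFree ι] {deg : M →+ ι} {d : ι} (hd : d ≠ 0) {p q : AddMonoidAlgebra R M}
    (hp : p ∈ gradeBy R deg d) (hq : q ∈ gradeBy R deg (-d)) (m : ℕ) {g : M} (hg : deg g = 0) :
    ((p + q) ^ (2 * m)).coeff g = m.centralBinom * ((p * q) ^ m).coeff g := by
  have coeff_eq_zero {i j : ℕ} (hij : i ≠ j) : (p ^ i * q ^ j).coeff g = 0 := by
    have hmem : p ^ i * q ^ j ∈ gradeBy R deg (i • d + j • -d) :=
      SetLike.mul_mem_graded (SetLike.pow_mem_graded i hp) (SetLike.pow_mem_graded j hq)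
    by_contra hne
    have hdeg : 0 = i • d + j • -d := hg ▸ hmem g (Finsupp.mem_support_iff.mpr hne)
    rw [smul_neg, ← sub_eq_add_neg, eq_comm, sub_eq_zero] at hdeg
    exact hij ((IsAddLeftRegular.all d).nsmul_injective hd hdeg)
  simp only [add_pow, coeff_sum, Finsupp.finsetSum_apply, ← nsmul_eq_mul', coeff_smul_apply]
  rw [Finset.sum_eq_single_of_mem m (by simp; omega)]
  · rw [show 2 * m - m = m by omega, mul_pow, nsmul_eq_mul, Nat.centralBinom]
  · intro i _ him
    rw [coeff_eq_zero (by omega), smul_zero]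

lemma coeff_single_zero_add_pow [AddCommMonoid M] (c : R) (p : AddMonoidAlgebra R M) (m : ℕ)
    (g : M) : ((single 0 c + p) ^ m).coeff g =
      ∑ k ∈ Finset.range (m + 1), m.choose k * c ^ (m - k) * (p ^ k).coeff g := by
  rw [add_comm, add_pow, coeff_sum, Finsupp.finsetSum_apply]
  refine Finset.sum_congr rfl fun k _ ↦ ?_
  rw [← nsmul_eq_mul', coeff_smul_apply, single_pow, smul_zero, mul_comm (p ^ k),
    coeff_single_zero_mul, nsmul_eq_mul, mul_assoc]

lemma one_add_single_pow [AddCommMonoid M] (g : M) (n : ℕ) :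
    (1 + single g (1 : R)) ^ n = ∑ k ∈ Finset.range (n + 1), single (k • g) (n.choose k : R) := by
  rw [add_comm, add_pow]
  refine Finset.sum_congr rfl fun k _ ↦ ?_
  rw [one_pow, mul_one, single_pow, one_pow, ← nsmul_eq_mul', smul_single, nsmul_one]

/-- The Franel number `∑ₖ (n choose k)³`, the constant term of
`((1 + x)(1 + y)(1 + x⁻¹y⁻¹))ⁿ`. -/
def franel (n : ℕ) : ℕ := ∑ k ∈ Finset.range (n + 1), n.choose k ^ 3

lemma nsmul_add_nsmul_add_nsmul_neg_eq_zero_iff [AddCommGroup G] {u v : G}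
    (huv : LinearIndependent ℤ ![u, v]) (i j k : ℕ) :
    i • u + j • v + k • -(u + v) = 0 ↔ j = i ∧ k = i := by
  refine ⟨fun h ↦ ?_, ?_⟩
  · have hcomb : ((i : ℤ) - k) • u + ((j : ℤ) - k) • v = 0 := by
      rw [← h]; module
    obtain ⟨hik, hjk⟩ := LinearIndependent.pair_iff.mp huv _ _ hcomb
    omega
  · rintro ⟨rfl, rfl⟩
    module

lemma coeff_zero_prod_one_add_single_pow [AddCommGroup G] {u v : G}
    (huv : LinearIndependent ℤ ![u, v]) (n : ℕ) :
    (((1 + single u (1 : R)) * (1 + single v 1) * (1 + single (-(u + v)) 1)) ^ n).coeff 0 =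
      (franel n : R) := by
  classical
  rw [mul_pow, mul_pow, one_add_single_pow, one_add_single_pow, one_add_single_pow,
    Finset.sum_mul_sum, Finset.sum_mul_sum, franel, Nat.cast_sum]
  simp only [Finset.sum_mul, single_mul_single, coeff_sum, Finsupp.finsetSum_apply, coeff_single,
    Finsupp.single_apply, nsmul_add_nsmul_add_nsmul_neg_eq_zero_iff huv, ite_and]
  refine Finset.sum_congr rfl fun i hi ↦ ?_
  simp only [Finset.sum_ite_eq', hi, if_true]
  push_cast
  ring

/-- The Laurent polynomial `(1 + x)(1 + y)(1 + x⁻¹y⁻¹)`, whose powers have the Franel numbers as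
constant terms. -/
def franelLaurent : LaurentC3 := (1 + X) * (1 + Y) * (1 + Xinv * Yinv)

lemma X_mul_Xinv : X * Xinv = 1 := by
  simp [X, Xinv, single_mul_single, one_def, ← Prod.zero_eq_mk]

lemma Y_mul_Yinv : Y * Yinv = 1 := by
  simp [Y, Yinv, single_mul_single, one_def, ← Prod.zero_eq_mk]

lemma Z_mul_Zinv : Z * Zinv = 1 := by
  simp [Z, Zinv, single_mul_single, one_def, ← Prod.zero_eq_mk]

lemma coeff_zero_franelLaurent_pow (n : ℕ) : (franelLaurent ^ n).coeff 0 = franel n := by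
  have hXY : LinearIndependent ℤ ![((1, 0, 0) : ℤ × ℤ × ℤ), (0, 1, 0)] := by
    simp [LinearIndependent.pair_iff]
  have hinv : Xinv * Yinv = single (-((1, 0, 0) + (0, 1, 0))) 1 := by
    simp [Xinv, Yinv, single_mul_single]
  rw [franelLaurent, hinv]
  exact coeff_zero_prod_one_add_single_pow hXY n

lemma f_eq_Z_mul_add_Zinv (a : ℂ) : f a = Z * (single 0 (a - 2) + franelLaurent) + Zinv := by
  have ha : (single 0 a : LaurentC3) = single 0 (a - 2) + 2 := by
    rw [← sub_eq_iff_eq_add, single_sub]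
    rfl
  rw [f, franelLaurent, ha]
  linear_combination (-Z * Yinv * (1 + Y)) * X_mul_Xinv - Z * (1 + Xinv) * Y_mul_Yinv

/-- The degree in `z`, as a homomorphism on exponent vectors. -/
def zDegree : ℤ × ℤ × ℤ →+ ℤ := (AddMonoidHom.snd ℤ ℤ).comp (AddMonoidHom.snd ℤ (ℤ × ℤ))

lemma franelLaurent_mem_gradeBy_zDegree : franelLaurent ∈ gradeBy ℂ zDegree 0 := by
  simp only [franelLaurent, X, Y, Xinv, Yinv, one_def, mul_add, add_mul, single_mul_single]
  repeat' apply add_mem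
  all_goals exact single_mem_gradeBy zDegree _ _

lemma coeff_zero_f_pow_two_mul (a : ℂ) (m : ℕ) :
    (f a ^ (2 * m)).coeff 0 = m.centralBinom *
      ∑ k ∈ Finset.range (m + 1), m.choose k * (a - 2) ^ (m - k) * franel k := by
  have hP : single 0 (a - 2) + franelLaurent ∈ gradeBy ℂ zDegree 0 :=
    add_mem (single_mem_gradeBy zDegree _ _) franelLaurent_mem_gradeBy_zDegree
  have hZ : Z ∈ gradeBy ℂ zDegree 1 := single_mem_gradeBy zDegree _ _
  have hZinv : Zinv ∈ gradeBy ℂ zDegree (-1) := single_mem_gradeBy zDegree _ _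
  have hZP : Z * (single 0 (a - 2) + franelLaurent) ∈ gradeBy ℂ zDegree 1 :=
    SetLike.mul_mem_graded hZ hP
  rw [f_eq_Z_mul_add_Zinv, coeff_add_pow_two_mul_of_mem_gradeBy one_ne_zero hZP hZinv m
    (map_zero zDegree), mul_right_comm, Z_mul_Zinv, one_mul, coeff_single_zero_add_pow]
  simp only [coeff_zero_franelLaurent_pow]

end

/-- The first constant terms of even powers of `f_a`:
`1`, `2a`, `6a² + 36`, `20a³ + 360a + 240`, `70a⁴ + 2520a² + 3360a + 6300`,
`252a⁵ + 15120a³ + 30240a² + 113400a + 90720`. -/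
theorem constant_terms_powers_f (a : ℂ) :
    (f a ^ 0).coeff (0, 0, 0) = 1 ∧
    (f a ^ 2).coeff (0, 0, 0) = 2 * a ∧
    (f a ^ 4).coeff (0, 0, 0) = 6 * a ^ 2 + 36 ∧
    (f a ^ 6).coeff (0, 0, 0) = 20 * a ^ 3 + 360 * a + 240 ∧
    (f a ^ 8).coeff (0, 0, 0) = 70 * a ^ 4 + 2520 * a ^ 2 + 3360 * a + 6300 ∧
    (f a ^ 10).coeff (0, 0, 0) =
      252 * a ^ 5 + 15120 * a ^ 3 + 30240 * a ^ 2 + 113400 * a + 90720 := by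
  have constant_term (m : ℕ) := coeff_zero_f_pow_two_mul a m
  refine ⟨(constant_term 0).trans ?_, (constant_term 1).trans ?_, (constant_term 2).trans ?_,
    (constant_term 3).trans ?_, (constant_term 4).trans ?_, (constant_term 5).trans ?_⟩
  all_goals
    simp only [Finset.sum_range_succ, Finset.sum_range_zero, franel, Nat.centralBinom, Nat.choose]
    push_cast
    ring

end
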